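/- There exists an absolute constant C > 0 (independent of K and n) such that for every compact subset K of a real Hilbert space X, every γ ∈ (0,1], and every sequence produced by the weak greedy algorithm with parameter γ, the error satisfies σ_n(K) ≤ C γ^{−1} √n · ε_n(co(K)) for all n ≥ 1. -/

import Mathlib

open scoped RealInnerProductSpace

/-- Dyadic entropy number: infimum of all `ε > 0` such that `K` is covered by `2^n`
balls of radius `ε`. -/
noncomputable def entropyNumber {X : Type*} [NormedAddCommGroup X] (n : ℕ) (K : Set X) : ℝ :=
  sInf {ε : ℝ | 0 < ε ∧ ∃ c : Fin (2 ^ n) → X, K ⊆ ⋃ i, Metric.closedBall (c i) ε}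

/-- Symmetric (absolutely) convex hull: closure of the set of finite sums `∑ cᵢ gᵢ`
with `gᵢ ∈ K` and `∑ |cᵢ| ≤ 1`. -/
noncomputable def symConvexHull {X : Type*} [NormedAddCommGroup X] [NormedSpace ℝ X]
    (K : Set X) : Set X :=
  closure {x : X | ∃ (m : ℕ) (c : Fin m → ℝ) (g : Fin m → X),
    (∀ i, g i ∈ K) ∧ (∑ i, |c i|) ≤ 1 ∧ x = ∑ i, c i • g i}

/-- Volume of the unit Euclidean ball in `ℝⁿ`. -/
noncomputable def unitBallVol (n : ℕ) : ℝ :=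
  Real.pi ^ ((n : ℝ) / 2) / Real.Gamma ((n : ℝ) / 2 + 1)

/-- Span of the first `n` terms of a sequence. -/
noncomputable def spanFirst {X : Type*} [NormedAddCommGroup X] [NormedSpace ℝ X]
    (f : ℕ → X) (n : ℕ) : Submodule ℝ X :=
  Submodule.span ℝ (f '' {i | i < n})

/-- The weak greedy algorithm with parameter `γ`: `f n` (the `(n+1)`-st iterate) lies in `K`
and its distance to the span of the previous iterates is at least `γ` times that of any
other element of `K`. -/
def IsWeakGreedy {X : Type*} [NormedAddCommGroup X] [NormedSpace ℝ X]
    (γ : ℝ) (K : Set X) (f : ℕ → X) : Prop :=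
  ∀ n : ℕ, f n ∈ K ∧ ∀ g ∈ K,
    γ * Metric.infDist g (spanFirst f n : Set X) ≤ Metric.infDist (f n) (spanFirst f n : Set X)

/-- The greedy error `σ_n(K) = sup_{f ∈ K} dist(f, span{f_1,…,f_n})`. -/
noncomputable def greedyError {X : Type*} [NormedAddCommGroup X] [NormedSpace ℝ X]
    (K : Set X) (f : ℕ → X) (n : ℕ) : ℝ :=
  sSup ((fun g => Metric.infDist g (spanFirst f n : Set X)) '' K)

/-- Kolmogorov `n`-width. -/
noncomputable def kolmogorovWidth {X : Type*} [NormedAddCommGroup X] [NormedSpace ℝ X]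
    (n : ℕ) (K : Set X) : ℝ :=
  sInf {d : ℝ | ∃ Y : Submodule ℝ X, FiniteDimensional ℝ Y ∧ Module.finrank ℝ Y ≤ n ∧
    d = sSup ((fun g => Metric.infDist g (Y : Set X)) '' K)}

/-- `f` admits an `ℓ¹` representation over the dictionary `D`. -/
def HasL1Rep {X : Type*} [NormedAddCommGroup X] [NormedSpace ℝ X] (D : Set X) (f : X) : Prop :=
  ∃ (c : ℕ → ℝ) (g : ℕ → X), (∀ i, g i ∈ D) ∧ Summable (fun i => |c i|) ∧
    HasSum (fun i => c i • g i) f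

/-- The variation norm `‖f‖_{L₁(D)}`. -/
noncomputable def varNorm {X : Type*} [NormedAddCommGroup X] [NormedSpace ℝ X]
    (D : Set X) (f : X) : ℝ :=
  sInf {t : ℝ | ∃ (c : ℕ → ℝ) (g : ℕ → X), (∀ i, g i ∈ D) ∧ Summable (fun i => |c i|) ∧
    HasSum (fun i => c i • g i) f ∧ t = ∑' i, |c i|}

/-- The orthogonal greedy algorithm with target `f`: `fa 0 = 0`; at each step `g n ∈ D`
maximizes `|⟨g, f - fa n⟩|` over `D`, and `fa (n+1)` is the orthogonal projection of `f`
onto `span{g 0, …, g n}`. -/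
def IsOGA {X : Type*} [NormedAddCommGroup X] [InnerProductSpace ℝ X]
    (D : Set X) (f : X) (g fa : ℕ → X) : Prop :=
  fa 0 = 0 ∧ ∀ n : ℕ,
    g n ∈ D ∧ (∀ h ∈ D, |⟪h, f - fa n⟫| ≤ |⟪g n, f - fa n⟫|) ∧
    fa (n + 1) ∈ Submodule.span ℝ (g '' {i | i ≤ n}) ∧
    ∀ w ∈ Submodule.span ℝ (g '' {i | i ≤ n}), ⟪f - fa (n + 1), w⟫ = 0

/-- Best `n`-term approximation error `E_n(f, D)`. -/
noncomputable def bestNTermError {X : Type*} [NormedAddCommGroup X] [NormedSpace ℝ X]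
    (D : Set X) (n : ℕ) (f : X) : ℝ :=
  sInf {r : ℝ | ∃ (c : Fin n → ℝ) (g : Fin n → X), (∀ i, g i ∈ D) ∧ r = ‖f - ∑ i, c i • g i‖}

/-- The K-functional `K(t, g)` between `X` and `L₁(D)`. -/
noncomputable def Kfunctional {X : Type*} [NormedAddCommGroup X] [NormedSpace ℝ X]
    (D : Set X) (t : ℝ) (gg : X) : ℝ :=
  sInf {s : ℝ | ∃ h : X, HasL1Rep D h ∧ s = ‖gg - h‖ + t * varNorm D h}

/-- The interpolation norm `‖g‖_θ = sup_{t > 0} t^{-θ} K(t, g)`. -/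
noncomputable def interpNorm {X : Type*} [NormedAddCommGroup X] [NormedSpace ℝ X]
    (D : Set X) (θ : ℝ) (gg : X) : ℝ :=
  sSup ((fun t => t ^ (-θ) * Kfunctional D t gg) '' Set.Ioi (0 : ℝ))

/-
Write `d k` for the distance from `f k` to the span of its predecessors. The hull `co(K)` contains
the image of the `ℓ¹` ball of `ℝⁿ` under `x ↦ ∑ k < n, x k • f k`. In the Gram–Schmidt coordinates
of `f` this map is a triangular matrix with determinant `∏ d k`, and passing to these coordinates
does not increase entropy numbers. Comparing the volume `(2ⁿ / n!) ∏ d k` of the image with that of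
`2ⁿ` Euclidean balls, whose unit ball has volume `Vₙ`, gives `∏ d k ≤ n! Vₙ εₙ(co(K))ⁿ`, while
`(n! Vₙ)^(1/n) ≤ √(2πn)`. The greedy choice makes every factor at least `γ σₙ(K)`.
-/

open MeasureTheory InnerProductSpace Module

section EntropyNumber

variable {X Y : Type*} [NormedAddCommGroup X] [NormedAddCommGroup Y] {A B : Set X} {n : ℕ}

theorem entropyNumber_nonneg (n : ℕ) (A : Set X) : 0 ≤ entropyNumber n A :=
  Real.sInf_nonneg fun _ hε => hε.1.le

theorem entropyNumber_le_of_subset_iUnion_closedBall {ε : ℝ} (hε : 0 ≤ ε) {c : Fin (2 ^ n) → X}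
    (hA : A ⊆ ⋃ i, Metric.closedBall (c i) ε) : entropyNumber n A ≤ ε :=
  le_of_forall_pos_le_add fun δ hδ => csInf_le ⟨0, fun _ h => h.1.le⟩
    ⟨by positivity, c, hA.trans <| Set.iUnion_mono fun _ =>
      Metric.closedBall_subset_closedBall (le_add_of_nonneg_right hδ.le)⟩

theorem le_apply_entropyNumber_of_forall_cover (hA : Bornology.IsBounded A) {b : ℝ} {φ : ℝ → ℝ}
    (hφ : Continuous φ)
    (h : ∀ ε > 0, ∀ c : Fin (2 ^ n) → X, A ⊆ ⋃ i, Metric.closedBall (c i) ε → b ≤ φ ε) :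
    b ≤ φ (entropyNumber n A) := by
  have hne : {ε : ℝ | 0 < ε ∧
      ∃ c : Fin (2 ^ n) → X, A ⊆ ⋃ i, Metric.closedBall (c i) ε}.Nonempty := by
    obtain ⟨R, hR, hAR⟩ := hA.exists_pos_norm_le
    exact ⟨R, hR, fun _ => 0, fun x hx => Set.mem_iUnion.2
      ⟨⟨0, by positivity⟩, mem_closedBall_zero_iff.2 (hAR x hx)⟩⟩
  have hmem := csInf_mem_closure hne ⟨0, fun _ h => h.1.le⟩
  refine closure_minimal ?_ (isClosed_le continuous_const hφ) hmem
  rintro ε ⟨hε, c, hc⟩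
  exact h ε hε c hc

theorem entropyNumber_mono (hB : Bornology.IsBounded B) (hAB : A ⊆ B) :
    entropyNumber n A ≤ entropyNumber n B :=
  le_apply_entropyNumber_of_forall_cover hB continuous_id fun _ hε _ hc =>
    entropyNumber_le_of_subset_iUnion_closedBall hε.le (hAB.trans hc)

theorem entropyNumber_image_le_of_lipschitzWith {L : NNReal} {g : X → Y} (hg : LipschitzWith L g)
    (hA : Bornology.IsBounded A) : entropyNumber n (g '' A) ≤ L * entropyNumber n A := by
  refine le_apply_entropyNumber_of_forall_cover hA (continuous_const_mul (L : ℝ))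
    fun ε hε c hc => entropyNumber_le_of_subset_iUnion_closedBall (c := g ∘ c) (by positivity) ?_
  rintro _ ⟨x, hx, rfl⟩
  obtain ⟨i, hi⟩ := Set.mem_iUnion.1 (hc hx)
  exact Set.mem_iUnion.2 ⟨i, hg.mapsTo_closedBall (c i) ε hi⟩

theorem measureReal_le_two_pow_mul_entropyNumber_pow [NormedSpace ℝ X] [FiniteDimensional ℝ X]
    [MeasurableSpace X] [BorelSpace X] (μ : Measure X) [μ.IsAddHaarMeasure]
    (hA : Bornology.IsBounded A) (n : ℕ) :
    μ.real A ≤ 2 ^ n * (entropyNumber n A ^ finrank ℝ X * μ.real (Metric.closedBall 0 1)) := by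
  refine le_apply_entropyNumber_of_forall_cover hA
    (φ := fun ε => 2 ^ n * (ε ^ finrank ℝ X * μ.real (Metric.closedBall 0 1))) (by fun_prop)
    fun ε hε c hc => ?_
  calc μ.real A
      ≤ μ.real (⋃ i, Metric.closedBall (c i) ε) :=
        measureReal_mono hc ((measure_iUnion_fintype_le μ _).trans_lt
          (ENNReal.sum_lt_top.2 fun _ _ => measure_closedBall_lt_top)).ne
    _ ≤ ∑ i, μ.real (Metric.closedBall (c i) ε) := measureReal_iUnion_fintype_le _
    _ = 2 ^ n * (ε ^ finrank ℝ X * μ.real (Metric.closedBall 0 1)) := by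
        simp [Measure.addHaar_real_closedBall' μ _ hε.le]

end EntropyNumber

section SymConvexHull

variable {X : Type*} [NormedAddCommGroup X] [NormedSpace ℝ X] {K : Set X}

theorem sum_smul_mem_symConvexHull {ι : Type*} [Fintype ι] {c : ι → ℝ} {v : ι → X}
    (hv : ∀ i, v i ∈ K) (hc : ∑ i, |c i| ≤ 1) : ∑ i, c i • v i ∈ symConvexHull K := by
  let φ := (Fintype.equivFin ι).symm
  refine subset_closure ⟨_, c ∘ φ, v ∘ φ, fun i => hv (φ i), ?_, ?_⟩
  · exact (φ.sum_comp fun i => |c i|).trans_le hc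
  · exact (φ.sum_comp fun i => c i • v i).symm

theorem symConvexHull_subset_closedBall {R : ℝ} (hR : 0 ≤ R) (hK : K ⊆ Metric.closedBall 0 R) :
    symConvexHull K ⊆ Metric.closedBall 0 R := by
  refine closure_minimal ?_ Metric.isClosed_closedBall
  rintro _ ⟨m, c, g, hg, hc, rfl⟩
  rw [mem_closedBall_zero_iff]
  calc ‖∑ i, c i • g i‖
      ≤ ∑ i, |c i| * R := norm_sum_le_of_le _ fun i _ => by
        rw [norm_smul, Real.norm_eq_abs]
        gcongr
        exact mem_closedBall_zero_iff.1 (hK (hg i))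
    _ = (∑ i, |c i|) * R := (Finset.sum_mul ..).symm
    _ ≤ R := mul_le_of_le_one_left hR hc

theorem isBounded_symConvexHull (hK : Bornology.IsBounded K) :
    Bornology.IsBounded (symConvexHull K) := by
  obtain ⟨R, hR, hKR⟩ := hK.exists_pos_norm_le
  exact Metric.isBounded_closedBall.subset <| symConvexHull_subset_closedBall hR.le
    fun x hx => mem_closedBall_zero_iff.2 (hKR x hx)

end SymConvexHull

section Volume

theorem unitBallVol_eq_sqrt_pi_pow_div (n : ℕ) :
    unitBallVol n = √Real.pi ^ n / Real.Gamma (n / 2 + 1) := by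
  rw [unitBallVol, Real.sqrt_eq_rpow, ← Real.rpow_natCast, ← Real.rpow_mul Real.pi_pos.le,
    one_div_mul_eq_div]

theorem unitBallVol_nonneg (n : ℕ) : 0 ≤ unitBallVol n :=
  div_nonneg (Real.rpow_nonneg Real.pi_pos.le _) (Real.Gamma_nonneg_of_nonneg (by positivity))

theorem unitBallVol_add_two (n : ℕ) :
    unitBallVol (n + 2) = 2 * Real.pi / (n + 2) * unitBallVol n := by
  have hΓ : Real.Gamma ((n + 2 : ℕ) / 2 + 1) = (n / 2 + 1) * Real.Gamma (n / 2 + 1) := by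
    rw [← Real.Gamma_add_one (by positivity)]
    push_cast
    ring_nf
  rw [unitBallVol_eq_sqrt_pi_pow_div, unitBallVol_eq_sqrt_pi_pow_div, hΓ, pow_add,
    Real.sq_sqrt Real.pi_pos.le]
  field

theorem factorial_mul_unitBallVol_le (n : ℕ) :
    n.factorial * unitBallVol n ≤ √(2 * Real.pi * n) ^ n := by
  induction n using Nat.twoStepInduction with
  | zero => simp [unitBallVol]
  | one =>
    have hV : unitBallVol 1 = 2 := by
      rw [unitBallVol_eq_sqrt_pi_pow_div, Nat.cast_one, Real.Gamma_add_one (by norm_num),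
        Real.Gamma_one_half_eq]
      field
    rw [hV, pow_one, Nat.factorial_one, Nat.cast_one]
    exact Real.le_sqrt_of_sq_le (by linarith [Real.two_le_pi])
  | more n ih _ =>
    calc ((n + 2).factorial : ℝ) * unitBallVol (n + 2)
        = 2 * Real.pi * (n + 1) * (n.factorial * unitBallVol n) := by
          rw [unitBallVol_add_two, Nat.factorial_succ, Nat.factorial_succ]
          push_cast
          field
      _ ≤ 2 * Real.pi * (n + 2 : ℕ) * √(2 * Real.pi * (n + 2 : ℕ)) ^ n := by
          have hih : n.factorial * unitBallVol n ≤ √(2 * Real.pi * (n + 2 : ℕ)) ^ n :=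
            ih.trans (by gcongr; simp)
          have hV := unitBallVol_nonneg n
          gcongr
          push_cast
          linarith
      _ = √(2 * Real.pi * (n + 2 : ℕ)) ^ (n + 2) := by
          rw [pow_add, Real.sq_sqrt (by positivity), mul_comm]

variable (ι : Type*) [Fintype ι]

theorem volumeReal_closedBall_zero_one :
    volume.real (Metric.closedBall (0 : EuclideanSpace ℝ ι) 1) = unitBallVol (Fintype.card ι) := by
  cases isEmpty_or_nonempty ι
  · simp [measureReal_def, volume_euclideanSpace_eq_dirac, unitBallVol]
  · rw [measureReal_def, EuclideanSpace.volume_closedBall,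
      ENNReal.ofReal_one, one_pow, one_mul, ← unitBallVol_eq_sqrt_pi_pow_div,
      ENNReal.toReal_ofReal (unitBallVol_nonneg _)]

/-- The open cross-polytope, i.e. the open unit ball of the `ℓ¹` norm, as a subset of Euclidean
space so that its linear images can be covered by Euclidean balls. -/
def crossPolytope : Set (EuclideanSpace ℝ ι) :=
  {x | ∑ i, |x i| < 1}

theorem volumeReal_crossPolytope :
    volume.real (crossPolytope ι) = 2 ^ Fintype.card ι / (Fintype.card ι).factorial := by
  have hvol := volume_sum_rpow_lt_one ι le_rfl
  simp only [Real.rpow_one, div_one, one_add_one_eq_two, Real.Gamma_two, mul_one,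
    Real.Gamma_nat_eq_factorial] at hvol
  have hmeas : MeasurableSet (crossPolytope ι) :=
    (isOpen_lt (by fun_prop) continuous_const).measurableSet
  rw [measureReal_def, ← (PiLp.volume_preserving_toLp ι).measure_preimage hmeas.nullMeasurableSet]
  exact (congrArg ENNReal.toReal hvol).trans (ENNReal.toReal_ofReal (by positivity))

theorem volumeReal_image_toLpLin_crossPolytope [DecidableEq ι] (M : Matrix ι ι ℝ) :
    volume.real (Matrix.toLpLin 2 2 M '' crossPolytope ι) =
      |M.det| * (2 ^ Fintype.card ι / (Fintype.card ι).factorial) := by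
  rw [measureReal_def, Measure.addHaar_image_linearMap, ENNReal.toReal_mul,
    ENNReal.toReal_ofReal (abs_nonneg _), ← measureReal_def, volumeReal_crossPolytope,
    LinearMap.det_toLpLin]

end Volume

section GramSchmidt

variable {𝕜 X ι : Type*} [RCLike 𝕜] [NormedAddCommGroup X] [InnerProductSpace 𝕜 X]
  [LinearOrder ι] [LocallyFiniteOrderBot ι] [WellFoundedLT ι]

theorem infDist_span_Iio_le_norm_gramSchmidt (v : ι → X) (k : ι) :
    Metric.infDist (v k) (Submodule.span 𝕜 (v '' Set.Iio k)) ≤ ‖gramSchmidt 𝕜 v k‖ := by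
  have hmem : v k - gramSchmidt 𝕜 v k ∈ Submodule.span 𝕜 (v '' Set.Iio k) := by
    rw [← span_gramSchmidt_Iio, gramSchmidt_def, sub_sub_cancel]
    refine Submodule.sum_mem _ fun i hi => ?_
    rw [Submodule.starProjection_singleton]
    exact Submodule.smul_mem _ _ (Submodule.subset_span ⟨i, Finset.mem_Iio.1 hi, rfl⟩)
  simpa [dist_eq_norm] using Metric.infDist_le_dist_of_mem (x := v k) hmem

theorem inner_gramSchmidt_self (v : ι → X) (k : ι) :
    inner 𝕜 (gramSchmidt 𝕜 v k) (v k) = (‖gramSchmidt 𝕜 v k‖ : 𝕜) ^ 2 := by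
  conv_lhs => rw [gramSchmidt_def'' 𝕜 v k]
  rw [inner_add_right, inner_self_eq_norm_sq_to_K, inner_sum, Finset.sum_eq_zero, add_zero]
  intro i hi
  rw [inner_smul_right, gramSchmidt_orthogonal 𝕜 v (Finset.mem_Iio.1 hi).ne', mul_zero]

theorem inner_gramSchmidtNormed_self (v : ι → X) (k : ι) :
    inner 𝕜 (gramSchmidtNormed 𝕜 v k) (v k) = ‖gramSchmidt 𝕜 v k‖ := by
  rw [gramSchmidtNormed, inner_smul_left, inner_gramSchmidt_self, map_inv₀, RCLike.conj_ofReal]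
  field

theorem inner_gramSchmidtNormed_of_lt (v : ι → X) {i j : ι} (hij : i < j) :
    inner 𝕜 (gramSchmidtNormed 𝕜 v j) (v i) = 0 := by
  rw [gramSchmidtNormed, inner_smul_left, gramSchmidt_inv_triangular 𝕜 v hij, mul_zero]

theorem det_inner_gramSchmidtNormed [Fintype ι] (v : ι → X) :
    (Matrix.of fun i j => inner 𝕜 (gramSchmidtNormed 𝕜 v i) (v j)).det =
      ∏ i, (‖gramSchmidt 𝕜 v i‖ : 𝕜) := by
  have htri : (Matrix.of fun i j => inner 𝕜 (gramSchmidtNormed 𝕜 v i) (v j)).IsUpperTriangular :=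
    fun _ _ hij => inner_gramSchmidtNormed_of_lt v hij
  rw [Matrix.det_of_isUpperTriangular htri]
  exact Finset.prod_congr rfl fun i _ => inner_gramSchmidtNormed_self v i

theorem orthonormal_gramSchmidtNormed_of_ne_zero {v : ι → X} (hv : ∀ i, gramSchmidt 𝕜 v i ≠ 0) :
    Orthonormal 𝕜 (gramSchmidtNormed 𝕜 v) :=
  (gramSchmidtNormed_orthonormal' v).comp (fun i => ⟨i, by simp [gramSchmidtNormed, hv i]⟩)
    fun _ _ h => congrArg Subtype.val h

end GramSchmidt

section InnerCoords

variable {𝕜 X ι : Type*} [RCLike 𝕜] [NormedAddCommGroup X] [InnerProductSpace 𝕜 X]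

/-- The analysis operator of a finite family `e`: the vector of inner products `⟨e i, x⟩`. When `e`
is orthonormal these are the coordinates of the orthogonal projection of `x` onto its span. -/
noncomputable def innerCoords (e : ι → X) : X →ₗ[𝕜] EuclideanSpace 𝕜 ι :=
  (WithLp.linearEquiv 2 𝕜 (ι → 𝕜)).symm.toLinearMap ∘ₗ
    LinearMap.pi fun i => (innerSL 𝕜 (e i)).toLinearMap

theorem innerCoords_apply (e : ι → X) (x : X) (i : ι) :
    innerCoords (𝕜 := 𝕜) e x i = inner 𝕜 (e i) x :=
  rfl

theorem lipschitzWith_innerCoords [Fintype ι] {e : ι → X} (he : Orthonormal 𝕜 e) :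
    LipschitzWith 1 (innerCoords (𝕜 := 𝕜) e) := by
  refine AddMonoidHomClass.lipschitz_of_bound_nnnorm _ 1 fun x => ?_
  rw [one_mul, ← NNReal.coe_le_coe, coe_nnnorm, coe_nnnorm, EuclideanSpace.norm_eq]
  exact Real.sqrt_le_iff.2 ⟨norm_nonneg x, he.sum_inner_products_le x⟩

theorem innerCoords_sum_smul [Fintype ι] [DecidableEq ι] (e v : ι → X) (x : EuclideanSpace 𝕜 ι) :
    innerCoords e (∑ j, x j • v j) =
      Matrix.toLpLin 2 2 (Matrix.of fun i j => inner 𝕜 (e i) (v j)) x := by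
  ext i
  simp [innerCoords_apply, Matrix.mulVec, dotProduct, mul_comm]

end InnerCoords

section Greedy

variable {X : Type*} [NormedAddCommGroup X] [NormedSpace ℝ X] {γ : ℝ} {K : Set X} {f : ℕ → X}

theorem spanFirst_eq_span_image_Iio (f : ℕ → X) {n : ℕ} (k : Fin n) :
    spanFirst f k = Submodule.span ℝ ((fun i : Fin n => f i) '' Set.Iio k) := by
  rw [← Set.image_image f, Fin.image_val_Iio]
  rfl

theorem greedyError_nonneg (K : Set X) (f : ℕ → X) (n : ℕ) : 0 ≤ greedyError K f n :=
  Real.sSup_nonneg <| by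
    rintro _ ⟨g, -, rfl⟩
    exact Metric.infDist_nonneg

theorem IsWeakGreedy.isBounded (hγ : 0 < γ) (hf : IsWeakGreedy γ K f) : Bornology.IsBounded K := by
  refine isBounded_iff_forall_norm_le.2 ⟨‖f 0‖ / γ, fun g hg => ?_⟩
  have h := (hf 0).2 g hg
  simp only [spanFirst, not_lt_zero, Set.ofPred_false, Set.image_empty, Submodule.span_empty,
    Submodule.bot_coe, Metric.infDist_singleton, dist_zero_right] at h
  exact (le_div_iff₀' hγ).2 h

theorem IsWeakGreedy.mul_greedyError_le_infDist (hγ : 0 < γ) (hf : IsWeakGreedy γ K f) {k n : ℕ}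
    (hkn : k ≤ n) : γ * greedyError K f n ≤ Metric.infDist (f k) (spanFirst f k) := by
  rw [← le_div_iff₀' hγ]
  refine csSup_le ⟨_, f 0, (hf 0).1, rfl⟩ ?_
  rintro _ ⟨g, hg, rfl⟩
  have hspan : spanFirst f k ≤ spanFirst f n :=
    Submodule.span_mono (Set.image_mono fun i (hi : i < k) => hi.trans_le hkn)
  calc Metric.infDist g (spanFirst f n)
      ≤ Metric.infDist g (spanFirst f k) :=
        Metric.infDist_le_infDist_of_subset hspan ⟨0, Submodule.zero_mem _⟩
    _ ≤ Metric.infDist (f k) (spanFirst f k) / γ := (le_div_iff₀' hγ).2 ((hf k).2 g hg)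

end Greedy

section SymConvexHullEntropy

variable {X : Type*} [NormedAddCommGroup X] [InnerProductSpace ℝ X] {K : Set X}

theorem abs_det_inner_le_entropyNumber_symConvexHull {ι : Type*} [Fintype ι] [DecidableEq ι]
    (hK : Bornology.IsBounded K) {e v : ι → X} (he : Orthonormal ℝ e) (hv : ∀ i, v i ∈ K) (n : ℕ) :
    |(Matrix.of fun i j => ⟪e i, v j⟫).det| *
        (2 ^ Fintype.card ι / (Fintype.card ι).factorial) ≤
      2 ^ n * (entropyNumber n (symConvexHull K) ^ Fintype.card ι *
        unitBallVol (Fintype.card ι)) := by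
  set T := Matrix.toLpLin 2 2 (Matrix.of fun i j => ⟪e i, v j⟫)
  have hlip := lipschitzWith_innerCoords he
  have hbdd := isBounded_symConvexHull hK
  have hsub : T '' crossPolytope ι ⊆ innerCoords (𝕜 := ℝ) e '' symConvexHull K := by
    rintro _ ⟨x, hx, rfl⟩
    exact ⟨_, sum_smul_mem_symConvexHull hv (le_of_lt hx), innerCoords_sum_smul e v x⟩
  have hTbdd := (hlip.isBounded_image hbdd).subset hsub
  have hentropy : entropyNumber n (T '' crossPolytope ι) ≤ entropyNumber n (symConvexHull K) :=
    (entropyNumber_mono (hlip.isBounded_image hbdd) hsub).trans <| by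
      simpa using entropyNumber_image_le_of_lipschitzWith hlip hbdd
  have hcover := measureReal_le_two_pow_mul_entropyNumber_pow volume hTbdd n
  rw [volumeReal_image_toLpLin_crossPolytope, finrank_euclideanSpace,
    volumeReal_closedBall_zero_one] at hcover
  have hε := entropyNumber_nonneg n (T '' crossPolytope ι)
  have hV := unitBallVol_nonneg (Fintype.card ι)
  exact hcover.trans (by gcongr)

theorem prod_norm_gramSchmidt_le_entropyNumber_symConvexHull {n : ℕ} (hK : Bornology.IsBounded K)
    {v : Fin n → X} (hv : ∀ i, v i ∈ K) :
    ∏ i, ‖gramSchmidt ℝ v i‖ ≤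
      n.factorial * unitBallVol n * entropyNumber n (symConvexHull K) ^ n := by
  by_cases hne : ∀ i, gramSchmidt ℝ v i ≠ 0
  · have h := abs_det_inner_le_entropyNumber_symConvexHull hK
      (orthonormal_gramSchmidtNormed_of_ne_zero hne) hv n
    rw [det_inner_gramSchmidtNormed, Fintype.card_fin] at h
    calc ∏ i, ‖gramSchmidt ℝ v i‖
        ≤ |∏ i, ‖gramSchmidt ℝ v i‖| * (2 ^ n / n.factorial) * (n.factorial / 2 ^ n) := by
          field_simp
          exact le_abs_self _
      _ ≤ 2 ^ n * (entropyNumber n (symConvexHull K) ^ n * unitBallVol n) *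
            (n.factorial / 2 ^ n) := mul_le_mul_of_nonneg_right h (by positivity)
      _ = n.factorial * unitBallVol n * entropyNumber n (symConvexHull K) ^ n := by field
  · obtain ⟨i, hi⟩ := not_forall_not.1 hne
    rw [Finset.prod_eq_zero (Finset.mem_univ i) (by rw [hi, norm_zero])]
    have hε := entropyNumber_nonneg n (symConvexHull K)
    have hV := unitBallVol_nonneg n
    positivity

theorem prod_infDist_spanFirst_le_entropyNumber_symConvexHull (hK : Bornology.IsBounded K)
    {f : ℕ → X} (hf : ∀ k, f k ∈ K) (n : ℕ) :
    ∏ k : Fin n, Metric.infDist (f k) (spanFirst f k) ≤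
      n.factorial * unitBallVol n * entropyNumber n (symConvexHull K) ^ n := by
  refine le_trans (Finset.prod_le_prod (fun _ _ => Metric.infDist_nonneg) fun k _ => ?_)
    (prod_norm_gramSchmidt_le_entropyNumber_symConvexHull hK fun k : Fin n => hf k)
  rw [spanFirst_eq_span_image_Iio]
  exact infDist_span_Iio_le_norm_gramSchmidt (fun i : Fin n => f i) k

end SymConvexHullEntropy

theorem weakGreedy_error_le_sqrt_entropy_hilbert_general {X : Type*} [NormedAddCommGroup X]
    [InnerProductSpace ℝ X] {γ : ℝ} (hγ : 0 < γ) {K : Set X} {f : ℕ → X} (hf : IsWeakGreedy γ K f)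
    {n : ℕ} (hn : 1 ≤ n) :
    greedyError K f n ≤
      √(2 * Real.pi) * γ⁻¹ * √n * entropyNumber n (symConvexHull K) := by
  have hσ := greedyError_nonneg K f n
  have hε := entropyNumber_nonneg n (symConvexHull K)
  have hpow : (γ * greedyError K f n) ^ n ≤
      (√(2 * Real.pi * n) * entropyNumber n (symConvexHull K)) ^ n :=
    calc (γ * greedyError K f n) ^ n
        = ∏ _k : Fin n, γ * greedyError K f n := by simp
      _ ≤ ∏ k : Fin n, Metric.infDist (f k) (spanFirst f k) :=
          Finset.prod_le_prod (fun _ _ => by positivity) fun k _ =>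
            hf.mul_greedyError_le_infDist hγ k.2.le
      _ ≤ n.factorial * unitBallVol n * entropyNumber n (symConvexHull K) ^ n :=
          prod_infDist_spanFirst_le_entropyNumber_symConvexHull (hf.isBounded hγ)
            (fun k => (hf k).1) n
      _ ≤ √(2 * Real.pi * n) ^ n * entropyNumber n (symConvexHull K) ^ n := by
          gcongr
          exact factorial_mul_unitBallVol_le n
      _ = _ := (mul_pow _ _ n).symm
  have hroot := le_of_pow_le_pow_left₀ (by lia) (by positivity) hpow
  rw [Real.sqrt_mul (by positivity)] at hroot
  calc greedyError K f n = γ⁻¹ * (γ * greedyError K f n) := by field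
    _ ≤ γ⁻¹ * (√(2 * Real.pi) * √n * entropyNumber n (symConvexHull K)) := by gcongr
    _ = _ := by ring

/-- there is an absolute constant `C` with
`σ_n(K) ≤ C γ⁻¹ √n ε_n(co(K))` for the weak greedy algorithm in any Hilbert space. -/
theorem weakGreedy_error_le_sqrt_entropy_hilbert :
    ∃ C : ℝ, 0 < C ∧
      ∀ (X : Type) (_ : NormedAddCommGroup X) (_ : InnerProductSpace ℝ X) (_ : CompleteSpace X)
        (K : Set X), IsCompact K →
        ∀ γ : ℝ, γ ∈ Set.Ioc (0 : ℝ) 1 →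
        ∀ f : ℕ → X, IsWeakGreedy γ K f →
        ∀ n : ℕ, 1 ≤ n →
          greedyError K f n
            ≤ C * γ⁻¹ * Real.sqrt n * entropyNumber n (symConvexHull K) :=
  ⟨√(2 * Real.pi), by positivity, fun _ _ _ _ _ _ _ hγ _ hf _ hn =>
    weakGreedy_error_le_sqrt_entropy_hilbert_general hγ.1 hf hn⟩
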